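/- Let f_k : G → ℂ be analytic functions on a domain G ⊆ ℂ with ∑_k |f_k(z)|² converging locally uniformly and not all f_k identically zero. Then the function z ↦ (1/2) log(∑_k |f_k(z)|²) is subharmonic on G. -/

import Mathlib

open MeasureTheory Metric Complex Filter

/-- The circle average `(2π)⁻¹ ∫₀^{2π} u(z + r e^{iθ}) dθ` of a function with
values in `[-∞, ∞]` (computed via `EReal.toReal`; for the functions considered
here, which are finite off a null set, this is the usual circle average). -/
noncomputable def circleAverage (u : ℂ → EReal) (z : ℂ) (r : ℝ) : ℝ :=
  (2 * Real.pi)⁻¹ *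
    ∫ θ in (0 : ℝ)..(2 * Real.pi), (u (z + r * Complex.exp (θ * Complex.I))).toReal

/-- `u : ℂ → [-∞, ∞)` is subharmonic on `G`: upper semicontinuous on `G`, and
satisfying the sub-mean-value inequality on every closed disc contained in `G`. -/
def SubharmonicOn (u : ℂ → EReal) (G : Set ℂ) : Prop :=
  UpperSemicontinuousOn u G ∧
    ∀ z ∈ G, ∀ r : ℝ, 0 < r → closedBall z r ⊆ G →
      u z ≤ (circleAverage u z r : ℝ)

/-! With `F z = (f_k z)_k`, a holomorphic function valued in `ℓ²`, the function in question is
`log ‖F‖`. For any holomorphic `F` valued in a normed space, pick a norming functional `φ` of `F z`: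
then `log ‖F z‖ = log |φ (F z)|` is at most the circle average of `log |φ ∘ F|` by Jensen's formula,
hence at most that of `log ‖F‖`. The same argument works in every `ℓᵖ` with `1 ≤ p < ∞`. -/

open scoped ENNReal Topology

section CircleAverage

variable {E : Type*} [NormedAddCommGroup E] [NormedSpace ℂ E] {c : ℂ} {R : ℝ}

theorem circleAverage_eq_real_circleAverage (u : ℂ → EReal) (z : ℂ) (r : ℝ) :
    circleAverage u z r = Real.circleAverage (fun w ↦ (u w).toReal) z r := rfl

theorem real_circleAverage_mono_codiscreteWithin {f₁ f₂ : ℂ → ℝ}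
    (hf₁ : CircleIntegrable f₁ c R) (hf₂ : CircleIntegrable f₂ c R) (hR : R ≠ 0)
    (h : f₁ ≤ᶠ[codiscreteWithin (sphere c |R|)] f₂) :
    Real.circleAverage f₁ c R ≤ Real.circleAverage f₂ c R := by
  have hmin : f₁ =ᶠ[codiscreteWithin (sphere c |R|)] fun w ↦ min (f₁ w) (f₂ w) := by
    filter_upwards [h] with w hw using (min_eq_left hw).symm
  calc Real.circleAverage f₁ c R
      = Real.circleAverage (fun w ↦ min (f₁ w) (f₂ w)) c R :=
        Real.circleAverage_congr_codiscreteWithin hmin hR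
    _ ≤ Real.circleAverage f₂ c R :=
        Real.circleAverage_mono (hf₁.congr_codiscreteWithin hmin) hf₂
          fun w _ ↦ min_le_right (f₁ w) (f₂ w)

theorem eventually_codiscreteWithin_sphere_ne_zero {g : ℂ → E}
    (hg : AnalyticOnNhd ℂ g (closedBall c R)) (hR : 0 ≤ R) (hgc : g c ≠ 0) :
    ∀ᶠ w in codiscreteWithin (sphere c R), g w ≠ 0 :=
  codiscreteWithin_mono sphere_subset_closedBall <|
    hg.preimage_zero_mem_codiscreteWithin hgc (mem_closedBall_self hR)
      (isConnected_closedBall hR)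

theorem log_norm_le_circleAverage_log_norm_complex {g : ℂ → ℂ}
    (hg : AnalyticOnNhd ℂ g (closedBall c R)) (hR : 0 < R) (hgc : g c ≠ 0) :
    Real.log ‖g c‖ ≤ Real.circleAverage (Real.log ‖g ·‖) c R := by
  rw [← abs_of_pos hR] at hg
  rw [hg.circleAverage_log_norm hR.ne' hgc]
  refine le_add_of_nonneg_left (finsum_nonneg fun u ↦ ?_)
  by_cases hu : u ∈ closedBall c |R|
  · refine mul_nonneg (mod_cast MeromorphicOn.AnalyticOnNhd.divisor_nonneg hg u) ?_
    obtain rfl | huc := eq_or_ne c u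
    · simp
    · rw [mem_closedBall', dist_eq_norm, abs_of_pos hR] at hu
      rw [← div_eq_mul_inv]
      exact Real.log_nonneg <| (one_le_div (norm_sub_pos_iff.2 huc)).2 hu
  · simp [hu]

theorem log_norm_le_circleAverage_log_norm {F : ℂ → E}
    (hF : AnalyticOnNhd ℂ F (closedBall c R)) (hR : 0 < R) (hFc : F c ≠ 0) :
    Real.log ‖F c‖ ≤ Real.circleAverage (Real.log ‖F ·‖) c R := by
  obtain ⟨φ, hφ_norm, hφ_c⟩ := exists_dual_vector ℂ (F c) (norm_ne_zero_iff.2 hFc)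
  have hφF : AnalyticOnNhd ℂ (fun w ↦ φ (F w)) (closedBall c R) := φ.comp_analyticOnNhd hF
  have hφF_c : φ (F c) ≠ 0 := by simpa [hφ_c] using hFc
  have hφ_le (w : ℂ) : ‖φ (F w)‖ ≤ ‖F w‖ := by simpa [hφ_norm] using φ.le_opNorm (F w)
  -- `Real.log 0 = 0`, so the comparison fails at zeros of `φ ∘ F` where `0 < ‖F‖ < 1`.
  have hlog_le : (fun w ↦ Real.log ‖φ (F w)‖) ≤ᶠ[codiscreteWithin (sphere c |R|)]
      fun w ↦ Real.log ‖F w‖ := by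
    rw [abs_of_pos hR]
    filter_upwards [eventually_codiscreteWithin_sphere_ne_zero hφF hR.le hφF_c] with w hw
    exact Real.log_le_log (norm_pos_iff.2 hw) (hφ_le w)
  calc Real.log ‖F c‖
      = Real.log ‖φ (F c)‖ := by simp [hφ_c]
    _ ≤ Real.circleAverage (fun w ↦ Real.log ‖φ (F w)‖) c R :=
        log_norm_le_circleAverage_log_norm_complex hφF hR hφF_c
    _ ≤ Real.circleAverage (fun w ↦ Real.log ‖F w‖) c R :=
        real_circleAverage_mono_codiscreteWithin
          ((hφF.mono sphere_subset_closedBall).meromorphicOn.circleIntegrable_log_norm_of_nonneg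
            hR.le)
          ((hF.mono sphere_subset_closedBall).meromorphicOn.circleIntegrable_log_norm_of_nonneg
            hR.le)
          hR.ne' hlog_le

end CircleAverage

section Subharmonic

variable {E : Type*} [NormedAddCommGroup E] {G : Set ℂ}

theorem SubharmonicOn.congr {u v : ℂ → EReal} (hu : SubharmonicOn u G) (huv : Set.EqOn u v G) :
    SubharmonicOn v G := by
  refine ⟨fun z hz ↦ UpperSemicontinuousWithinAt.congr_of_eventuallyEq (hu.1 z hz) hz
    huv.eventuallyEq_nhdsWithin, fun z hz r hr hball ↦ ?_⟩
  have havg : circleAverage u z r = circleAverage v z r := by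
    simp only [circleAverage_eq_real_circleAverage]
    refine Real.circleAverage_congr_sphere fun w hw ↦ congrArg EReal.toReal (huv (hball ?_))
    rw [abs_of_pos hr] at hw
    exact sphere_subset_closedBall hw
  rw [← huv hz, ← havg]
  exact hu.2 z hz r hr hball

theorem log_enorm_of_ne_zero {x : E} (hx : x ≠ 0) :
    ENNReal.log ‖x‖ₑ = (Real.log ‖x‖ : ℝ) := by
  rw [← ofReal_norm, ENNReal.log_ofReal_of_pos (norm_pos_iff.2 hx)]

theorem toReal_log_enorm (x : E) : (ENNReal.log ‖x‖ₑ).toReal = Real.log ‖x‖ := by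
  obtain rfl | hx := eq_or_ne x 0
  · simp
  · rw [log_enorm_of_ne_zero hx, EReal.toReal_coe]

theorem subharmonicOn_log_enorm [NormedSpace ℂ E] {F : ℂ → E} (hF : AnalyticOnNhd ℂ F G) :
    SubharmonicOn (fun z ↦ ENNReal.log ‖F z‖ₑ) G := by
  refine ⟨(ENNReal.continuous_log.comp_continuousOn hF.continuousOn.enorm).upperSemicontinuousOn,
    fun z _ r hr hball ↦ ?_⟩
  simp only [circleAverage_eq_real_circleAverage, toReal_log_enorm]
  obtain hFz | hFz := eq_or_ne (F z) 0
  · simp [hFz]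
  · rw [log_enorm_of_ne_zero hFz, EReal.coe_le_coe_iff]
    exact log_norm_le_circleAverage_log_norm (hF.mono hball) hr hFz

end Subharmonic

section LpFamily

variable {ι κ : Type*} {E : ι → Type*} [∀ i, NormedAddCommGroup (E i)] {p : ℝ≥0∞}
  {G : Set ℂ} {l : Filter κ} {s : κ → Finset ι}

theorem log_enorm_lp [Fact (1 ≤ p)] (hp : 0 < p.toReal) (x : lp E p) :
    ENNReal.log ‖x‖ₑ = if ∑' i, ‖x i‖ ^ p.toReal = 0 then (⊥ : EReal)
      else ((1 / p.toReal * Real.log (∑' i, ‖x i‖ ^ p.toReal) : ℝ) : EReal) := by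
  rw [← lp.norm_rpow_eq_tsum hp]
  obtain rfl | hx := eq_or_ne x 0
  · simp [hp.ne']
  · have hx_pos : 0 < ‖x‖ := norm_pos_iff.2 hx
    rw [if_neg (Real.rpow_pos_of_pos hx_pos _).ne', log_enorm_of_ne_zero hx, Real.log_rpow hx_pos,
      one_div, inv_mul_cancel_left₀ hp.ne']

theorem summable_of_tendsto_sum_of_nonneg [l.NeBot] {a : ι → ℝ} {S : ℝ} (ha : ∀ i, 0 ≤ a i)
    (hs : Tendsto s l atTop) (hS : Tendsto (fun n ↦ ∑ i ∈ s n, a i) l (𝓝 S)) : Summable a :=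
  summable_of_sum_le ha fun t ↦ ge_of_tendsto hS <| by
    filter_upwards [hs.eventually_ge_atTop t] with n hn
    exact Finset.sum_le_sum_of_subset_of_nonneg hn fun i _ _ ↦ ha i

theorem tendstoLocallyUniformlyOn_sum_lp_single [DecidableEq ι] [Fact (1 ≤ p)]
    (hp : 0 < p.toReal) {X : Type*} [TopologicalSpace X] {A : Set X} {F : X → lp E p}
    (hconv : TendstoLocallyUniformlyOn (fun n z ↦ ∑ i ∈ s n, ‖F z i‖ ^ p.toReal)
      (fun z ↦ ‖F z‖ ^ p.toReal) l A) :
    TendstoLocallyUniformlyOn (fun n z ↦ ∑ i ∈ s n, lp.single p i (F z i)) F l A := by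
  rw [Metric.tendstoLocallyUniformlyOn_iff] at hconv ⊢
  intro ε hε x hx
  obtain ⟨t, ht, hclose⟩ := hconv (ε ^ p.toReal) (Real.rpow_pos_of_pos hε _) x hx
  refine ⟨t, ht, hclose.mono fun n hn z hz ↦ ?_⟩
  rw [dist_eq_norm, ← Real.rpow_lt_rpow_iff (norm_nonneg _) hε.le hp,
    lp.norm_compl_sum_single hp]
  exact (le_abs_self _).trans_lt (hn z hz)

variable [∀ i, NormedSpace ℂ (E i)] [∀ i, CompleteSpace (E i)]

theorem differentiableOn_lp [l.NeBot] [Fact (1 ≤ p)] (hp : 0 < p.toReal) (hG : IsOpen G)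
    {F : ℂ → lp E p}
    (hF : ∀ i, DifferentiableOn ℂ (fun z ↦ F z i) G)
    (hconv : TendstoLocallyUniformlyOn (fun n z ↦ ∑ i ∈ s n, ‖F z i‖ ^ p.toReal)
      (fun z ↦ ‖F z‖ ^ p.toReal) l G) :
    DifferentiableOn ℂ F G := by
  classical
  exact (tendstoLocallyUniformlyOn_sum_lp_single hp hconv).differentiableOn
    (Eventually.of_forall fun n ↦ DifferentiableOn.fun_sum fun i _ ↦
      (lp.singleContinuousLinearMap ℂ E p i).differentiable.comp_differentiableOn (hF i)) hG

theorem subharmonic_log_norm_of_holomorphic_family_general [l.NeBot] [Fact (1 ≤ p)] (hp : p ≠ ∞)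
    (hG : IsOpen G) {f : ∀ i, ℂ → E i} (hf : ∀ i, DifferentiableOn ℂ (f i) G)
    (hs : Tendsto s l atTop)
    (hconv : TendstoLocallyUniformlyOn (fun n z ↦ ∑ i ∈ s n, ‖f i z‖ ^ p.toReal)
      (fun z ↦ ∑' i, ‖f i z‖ ^ p.toReal) l G) :
    SubharmonicOn
      (fun z ↦ if ∑' i, ‖f i z‖ ^ p.toReal = 0 then (⊥ : EReal)
        else ((1 / p.toReal * Real.log (∑' i, ‖f i z‖ ^ p.toReal) : ℝ) : EReal)) G := by
  have hp_pos : 0 < p.toReal := ENNReal.toReal_pos (zero_lt_one.trans_le Fact.out).ne' hp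
  have hmem (z : ℂ) (hz : z ∈ G) : ∃ x : lp E p, ∀ i, x i = f i z :=
    ⟨⟨fun i ↦ f i z, memℓp_gen <| summable_of_tendsto_sum_of_nonneg (fun i ↦ by positivity) hs
      (hconv.tendsto_at hz)⟩, fun _ ↦ rfl⟩
  choose! F hFf using hmem
  have hF : DifferentiableOn ℂ F G := by
    refine differentiableOn_lp (s := s) (l := l) hp_pos hG
      (fun i ↦ (hf i).congr fun z hz ↦ hFf z hz i) ?_
    refine (hconv.congr fun n z hz ↦ ?_).congr_right fun z hz ↦ ?_
    · simp only [hFf z hz]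
    · simp only [lp.norm_rpow_eq_tsum hp_pos, hFf z hz]
  refine (subharmonicOn_log_enorm (hF.analyticOnNhd hG)).congr fun z hz ↦ ?_
  simp only [log_enorm_lp hp_pos, hFf z hz]

end LpFamily

/-- If `f_k : G → ℂ` are holomorphic on a domain `G`, with `∑_k |f_k|²`
converging locally uniformly on `G` and not all `f_k` identically zero, then
`z ↦ (1/2) log ∑_k |f_k(z)|²` is subharmonic on `G` (with value `-∞` at common
zeroes of all the `f_k`). -/
theorem subharmonic_log_norm_of_holomorphic_family
    (G : Set ℂ) (hG : IsOpen G) (hGc : IsConnected G)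
    (f : ℕ → ℂ → ℂ) (hf : ∀ k, DifferentiableOn ℂ (f k) G)
    (hconv : TendstoLocallyUniformlyOn
      (fun N z => ∑ k ∈ Finset.range N, ‖f k z‖ ^ 2)
      (fun z => ∑' k, ‖f k z‖ ^ 2) atTop G)
    (hnz : ∃ k, ∃ z ∈ G, f k z ≠ 0) :
    SubharmonicOn
      (fun z => if (∑' k, ‖f k z‖ ^ 2) = 0 then (⊥ : EReal)
        else ((1 / 2 * Real.log (∑' k, ‖f k z‖ ^ 2) : ℝ) : EReal)) G := by
  simpa using subharmonic_log_norm_of_holomorphic_family_general (p := 2) ENNReal.ofNat_ne_top hG hf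
    tendsto_finset_range (by simpa using hconv)
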